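/- arXiv:2111.00421 — 2 statements merged into one kernel-verified Lean document; each statement's English description precedes it below -/
import Mathlib

section
/- Let α : [0,1] → ℝ be Lipschitz and strongly concave with α(0) = α(1) = 0, let λ = ∂⁻α be its left derivative on (0,1], and fix ε₂ > 0. Then there exists ε₃ > 0 such that for every Lipschitz concave function α̂ : [0,1] → ℝ with α̂(0) = α̂(1) = 0 and sup_{x∈[0,1]} |α(x) − α̂(x)| < ε₃, setting λ̂ = ∂⁻α̂, one has V(λ̂) < exp(ε₂/2) · V(λ). -/
/-!
The functional `V` is upper semicontinuous for uniform convergence of concave functions at a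
strongly concave `α`. Suppose not: there are concave `αₙ → α` uniformly with left derivatives `lₙ`
and `∬ log rₙ ≥ ε₂ / 2 + ∬ log r`, where `r` and `rₙ` are the difference quotients
`(l x - l y) / (y - x)`.

* At every point where `α` is differentiable, hence almost everywhere, `lₙ → l`
  (`tendsto_leftDeriv`). Strong concavity gives `r ≥ c > 0`, so `log rₙ → log r` almost everywhere.
  In particular the value `log 0 = 0` at the points with `rₙ = 0` plays no role in the limit.
* Comparing left derivatives with the secants ending at `0` and at `1` gives the uniform bound
  `rₙ ≤ (M / x + M / (1 - y)) / (y - x)`, so `log rₙ` is dominated from above by the integrable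
  function `domFun M` (`log_quot_le_domFun`, `integrableOn_domFun`).

Hence `∬ (max (log rₙ) (log r) - log r) → 0` by dominated convergence, which is incompatible with
the lower bound on `∬ log rₙ`.
-/


open MeasureTheory Classical

noncomputable section

/-- The region `{(x, y) : 0 < x < y < 1}`. -/
def lowTri : Set (ℝ × ℝ) := {p : ℝ × ℝ | 0 < p.1 ∧ p.1 < p.2 ∧ p.2 < 1}

/-- `V(l) = exp(∬_{0<x<y<1} log((l(x) − l(y))/(y − x)) dx dy)`, with the convention that it is
`0` when the double integral equals `−∞` (i.e. when the integrand is not integrable). -/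
def Vcont (l : ℝ → ℝ) : ℝ :=
  if IntegrableOn (fun p : ℝ × ℝ => Real.log ((l p.1 - l p.2) / (p.2 - p.1))) lowTri volume
  then Real.exp (∫ p in lowTri, Real.log ((l p.1 - l p.2) / (p.2 - p.1)))
  else 0

/-! ### Left derivatives of concave functions -/

section LeftDeriv

variable {f : ℝ → ℝ} {d a x b : ℝ}

lemma leftDeriv_le_secant (hf : ConcaveOn ℝ (Set.Icc 0 1) f) (ha : 0 ≤ a) (hax : a < x)
    (hx : x ≤ 1) (hd : HasDerivWithinAt f d (Set.Iio x) x) :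
    d ≤ (f x - f a) / (x - a) := by
  have h := hf.le_slope_of_hasDerivWithinAt_Iio ⟨ha, hax.le.trans hx⟩ ⟨ha.trans hax.le, hx⟩ hax hd
  rwa [slope_def_field] at h

lemma secant_le_leftDeriv (hf : ConcaveOn ℝ (Set.Icc 0 1) f) (hx : 0 < x) (hxb : x < b)
    (hb : b ≤ 1) (hd : HasDerivWithinAt f d (Set.Iio x) x) :
    (f b - f x) / (b - x) ≤ d := by
  have h := (hasDerivWithinAt_iff_tendsto_slope' Set.self_notMem_Iio).mp hd
  refine ge_of_tendsto h ?_
  filter_upwards [Ioo_mem_nhdsLT hx] with u hu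
  rw [slope_comm, slope_def_field]
  exact hf.slope_anti_adjacent ⟨hu.1.le, by linarith [hu.2]⟩ ⟨by linarith, hb⟩ hu.2 hxb

end LeftDeriv

lemma leftDeriv_antitoneOn {f g : ℝ → ℝ} (hf : ConcaveOn ℝ (Set.Icc 0 1) f)
    (hg : ∀ x ∈ Set.Ioc (0 : ℝ) 1, HasDerivWithinAt f (g x) (Set.Iio x) x) :
    AntitoneOn g (Set.Ioc 0 1) := by
  intro x hx y hy hxy
  rcases hxy.eq_or_lt with rfl | hlt
  · exact le_rfl
  · exact (leftDeriv_le_secant hf hx.1.le hlt hy.2 (hg y hy)).trans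
      (secant_le_leftDeriv hf hx.1 hlt hy.2 (hg x hx))

/-- Left derivatives of pointwise convergent concave functions converge at each point where the
limit is differentiable, since they are squeezed between secant slopes on the two sides. -/
lemma tendsto_leftDeriv {α : ℝ → ℝ} {A : ℕ → ℝ → ℝ} {L : ℕ → ℝ} {x d : ℝ}
    (hx : x ∈ Set.Ioo (0 : ℝ) 1) (hA : ∀ n, ConcaveOn ℝ (Set.Icc 0 1) (A n))
    (hL : ∀ n, HasDerivWithinAt (A n) (L n) (Set.Iio x) x)
    (hlim : ∀ u ∈ Set.Icc (0 : ℝ) 1, Filter.Tendsto (fun n => A n u) Filter.atTop (nhds (α u)))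
    (hd : HasDerivAt α d x) :
    Filter.Tendsto L Filter.atTop (nhds d) := by
  have hs := hasDerivAt_iff_tendsto_slope.mp hd
  have hxI : x ∈ Set.Icc (0 : ℝ) 1 := ⟨hx.1.le, hx.2.le⟩
  have hsec : ∀ u ∈ Set.Icc (0 : ℝ) 1,
      Filter.Tendsto (fun n => slope (A n) x u) Filter.atTop (nhds (slope α x u)) := by
    intro u hu
    simp only [slope_def_field]
    exact ((hlim u hu).sub (hlim x hxI)).div_const _
  refine tendsto_order.2 ⟨fun e he => ?_, fun e he => ?_⟩
  · have h1 : ∀ᶠ u in nhdsWithin x (Set.Ioi x), e < slope α x u :=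
      (hs.mono_left (nhdsWithin_mono _ (fun u hu => ne_of_gt hu))).eventually (lt_mem_nhds he)
    obtain ⟨b, hb1, hb2⟩ := (h1.and (Ioo_mem_nhdsGT hx.2)).exists
    filter_upwards [(hsec b ⟨by linarith [hb2.1, hx.1], hb2.2.le⟩).eventually
      (lt_mem_nhds hb1)] with n hn
    rw [slope_def_field] at hn
    exact hn.trans_le (secant_le_leftDeriv (hA n) hx.1 hb2.1 hb2.2.le (hL n))
  · have h1 : ∀ᶠ u in nhdsWithin x (Set.Iio x), slope α x u < e :=
      (hs.mono_left (nhdsWithin_mono _ (fun u hu => ne_of_lt hu))).eventually (gt_mem_nhds he)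
    obtain ⟨a, ha1, ha2⟩ := (h1.and (Ioo_mem_nhdsLT hx.1)).exists
    filter_upwards [(hsec a ⟨ha2.1.le, by linarith [ha2.2, hx.2]⟩).eventually
      (gt_mem_nhds ha1)] with n hn
    rw [slope_comm, slope_def_field] at hn
    exact (leftDeriv_le_secant (hA n) ha2.1.le ha2.2 hx.2.le (hL n)).trans_lt hn

/-- Strong concavity with modulus `c` makes the left derivative decrease at rate at least `c`. -/
lemma le_quot_of_strongConcave {α l : ℝ → ℝ} {c : ℝ}
    (hc : ConcaveOn ℝ (Set.Icc 0 1) (fun x => α x + c / 2 * x ^ 2))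
    (hl : ∀ x ∈ Set.Ioc (0 : ℝ) 1, HasDerivWithinAt α (l x) (Set.Iio x) x)
    {p : ℝ × ℝ} (hp : p ∈ lowTri) : c ≤ (l p.1 - l p.2) / (p.2 - p.1) := by
  obtain ⟨h0, h1, h2⟩ := hp
  have hanti : AntitoneOn (fun x => l x + c * x) (Set.Ioc 0 1) := by
    refine leftDeriv_antitoneOn hc (fun x hx => ?_)
    have hq : HasDerivAt (fun x : ℝ => c / 2 * x ^ 2) (c * x) x := by
      have := (hasDerivAt_pow 2 x).const_mul (c / 2)
      exact this.congr_deriv (by push_cast; ring)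
    exact (hl x hx).add hq.hasDerivWithinAt
  have h := hanti ⟨h0, by linarith⟩ ⟨by linarith, h2.le⟩ h1.le
  rw [le_div_iff₀ (by linarith)]
  simp only at h
  linarith

/-! ### The dominating function -/

/-- The logarithm of `2M / (x (1 - y) (y - x))`, an integrable upper bound on `lowTri` for the
integrand of `Vcont l` when `l` is the left derivative of a concave function bounded by `M` that
vanishes at `0` and `1`. -/
def domFun (M : ℝ) (p : ℝ × ℝ) : ℝ :=
  Real.log (2 * M) - Real.log p.1 - Real.log (1 - p.2) - Real.log (p.2 - p.1)

lemma measurableSet_lowTri : MeasurableSet lowTri :=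
  (measurableSet_lt measurable_const measurable_fst).inter
    ((measurableSet_lt measurable_fst measurable_snd).inter
      (measurableSet_lt measurable_snd measurable_const))

lemma lowTri_subset : lowTri ⊆ Set.Ioo (0 : ℝ) 1 ×ˢ Set.Ioo (0 : ℝ) 1 := by
  rintro p ⟨h0, h1, h2⟩
  exact ⟨⟨h0, h1.trans h2⟩, ⟨h0.trans h1, h2⟩⟩

lemma restrict_lowTri_le :
    (volume : Measure (ℝ × ℝ)).restrict lowTri ≤
      (volume.restrict (Set.Ioo (0 : ℝ) 1)).prod (volume.restrict (Set.Ioo (0 : ℝ) 1)) := by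
  rw [Measure.prod_restrict]
  exact Measure.restrict_mono lowTri_subset le_rfl

lemma integrableOn_log_unit : IntegrableOn Real.log (Set.Ioo (0 : ℝ) 1) volume := by
  have h : IntervalIntegrable Real.log volume 0 1 := intervalIntegral.intervalIntegrable_log'
  exact ((intervalIntegrable_iff_integrableOn_Ioc_of_le zero_le_one).1 h).mono_set
    Set.Ioo_subset_Ioc_self

lemma integrableOn_log_one_sub :
    IntegrableOn (fun y : ℝ => Real.log (1 - y)) (Set.Ioo (0 : ℝ) 1) volume := by
  have h : IntervalIntegrable Real.log volume 1 0 := intervalIntegral.intervalIntegrable_log'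
  have h2 := h.comp_sub_left 1
  simp only [sub_self, sub_zero] at h2
  exact ((intervalIntegrable_iff_integrableOn_Ioc_of_le zero_le_one).1 h2).mono_set
    Set.Ioo_subset_Ioc_self

/-- The diagonal singularity is integrable: the shear `(x, y) ↦ (x, y - x)` preserves volume and
maps `lowTri` into the unit square. -/
lemma integrableOn_log_diag :
    IntegrableOn (fun p : ℝ × ℝ => Real.log (p.2 - p.1)) lowTri volume := by
  have h1 : IntegrableOn (fun p : ℝ × ℝ => Real.log p.2)
      (Set.Ioo (0 : ℝ) 1 ×ˢ Set.Ioo (0 : ℝ) 1) volume := by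
    have := integrableOn_log_unit.integrable.comp_snd (volume.restrict (Set.Ioo (0 : ℝ) 1))
    rwa [Measure.prod_restrict] at this
  have h2 := (integrable_indicator_iff (measurableSet_Ioo.prod measurableSet_Ioo)).2 h1
  have h3 := (measurePreserving_prod_sub (volume : Measure ℝ) (volume : Measure ℝ)
    ).integrable_comp_of_integrable h2
  refine (h3.integrableOn (s := lowTri)).congr_fun ?_ measurableSet_lowTri
  rintro p ⟨h0, h1, h2⟩
  simp only [Function.comp_apply]
  rw [Set.indicator_of_mem]
  exact ⟨⟨h0, h1.trans h2⟩, ⟨by simpa using h1, by simp only; linarith⟩⟩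

lemma integrableOn_domFun (M : ℝ) : IntegrableOn (domFun M) lowTri volume := by
  have hx : Integrable (fun p : ℝ × ℝ => Real.log p.1) (volume.restrict lowTri) :=
    (integrableOn_log_unit.integrable.comp_fst _).mono_measure restrict_lowTri_le
  have hy : Integrable (fun p : ℝ × ℝ => Real.log (1 - p.2)) (volume.restrict lowTri) :=
    (integrableOn_log_one_sub.integrable.comp_snd _).mono_measure restrict_lowTri_le
  have hc : Integrable (fun _ : ℝ × ℝ => Real.log (2 * M)) (volume.restrict lowTri) :=
    (integrable_const (Real.log (2 * M))).mono_measure restrict_lowTri_le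
  exact ((hc.sub hx).sub hy).sub integrableOn_log_diag

lemma domFun_nonneg {M : ℝ} (hM : 1 ≤ M) {p : ℝ × ℝ} (hp : p ∈ lowTri) : 0 ≤ domFun M p := by
  obtain ⟨h0, h1, h2⟩ := hp
  have e1 := Real.log_nonneg (x := 2 * M) (by linarith)
  have e2 := Real.log_nonpos h0.le (by linarith)
  have e3 := Real.log_nonpos (x := 1 - p.2) (by linarith) (by linarith)
  have e4 := Real.log_nonpos (x := p.2 - p.1) (by linarith) (by linarith)
  unfold domFun
  linarith

lemma log_quot_le_domFun {f g : ℝ → ℝ} {M : ℝ} (hM : 1 ≤ M)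
    (hf : ConcaveOn ℝ (Set.Icc 0 1) f) (hf0 : f 0 = 0) (hf1 : f 1 = 0)
    (hfM : ∀ x ∈ Set.Icc (0 : ℝ) 1, f x ≤ M)
    (hg : ∀ x ∈ Set.Ioc (0 : ℝ) 1, HasDerivWithinAt f (g x) (Set.Iio x) x)
    {p : ℝ × ℝ} (hp : p ∈ lowTri) :
    Real.log ((g p.1 - g p.2) / (p.2 - p.1)) ≤ domFun M p := by
  have hdom := domFun_nonneg hM hp
  obtain ⟨h0, h1, h2⟩ := hp
  obtain ⟨x, y⟩ := p
  simp only at h0 h1 h2 ⊢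
  have hyx : 0 < y - x := by linarith
  have hy1 : 0 < 1 - y := by linarith
  have hanti : g y ≤ g x :=
    leftDeriv_antitoneOn hf hg ⟨h0, by linarith⟩ ⟨by linarith, h2.le⟩ h1.le
  rcases hanti.eq_or_lt with heq | hlt
  · simpa [heq] using hdom
  · have hgx : g x ≤ M / x := by
      have h := leftDeriv_le_secant hf le_rfl h0 (by linarith) (hg x ⟨h0, by linarith⟩)
      rw [hf0, sub_zero, sub_zero] at h
      exact h.trans (div_le_div_of_nonneg_right (hfM x ⟨h0.le, by linarith⟩) h0.le)
    have hgy : -(M / (1 - y)) ≤ g y := by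
      have h := secant_le_leftDeriv hf (h0.trans h1) h2 le_rfl (hg y ⟨by linarith, h2.le⟩)
      rw [hf1, zero_sub] at h
      refine le_trans ?_ h
      rw [← neg_div]
      exact div_le_div_of_nonneg_right (neg_le_neg (hfM y ⟨by linarith, h2.le⟩)) hy1.le
    have hsum : g x - g y ≤ 2 * M / (x * (1 - y)) := by
      have hx2 : M / x + M / (1 - y) ≤ 2 * M / (x * (1 - y)) := by
        rw [div_add_div _ _ h0.ne' hy1.ne']
        refine div_le_div_of_nonneg_right ?_ (by positivity)
        nlinarith
      linarith
    have hpos : 0 < (g x - g y) / (y - x) := div_pos (by linarith) hyx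
    have hle : (g x - g y) / (y - x) ≤ 2 * M / (x * (1 - y)) / (y - x) :=
      div_le_div_of_nonneg_right hsum hyx.le
    refine (Real.log_le_log hpos hle).trans (le_of_eq ?_)
    rw [Real.log_div (by positivity) hyx.ne', Real.log_div (by positivity) (by positivity),
      Real.log_mul h0.ne' hy1.ne']
    simp only [domFun]
    ring

lemma aestronglyMeasurable_log_quot {l : ℝ → ℝ} (hl : AntitoneOn l (Set.Ioc 0 1)) :
    AEStronglyMeasurable (fun p : ℝ × ℝ => Real.log ((l p.1 - l p.2) / (p.2 - p.1)))
      (volume.restrict lowTri) := by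
  have hm : AEStronglyMeasurable l (volume.restrict (Set.Ioo (0 : ℝ) 1)) :=
    (aemeasurable_restrict_of_antitoneOn measurableSet_Ioo
      (hl.mono Set.Ioo_subset_Ioc_self)).aestronglyMeasurable
  have h1 : AEStronglyMeasurable (fun p : ℝ × ℝ => l p.1) (volume.restrict lowTri) :=
    (hm.comp_fst (ν := volume.restrict (Set.Ioo (0 : ℝ) 1))).mono_measure restrict_lowTri_le
  have h2 : AEStronglyMeasurable (fun p : ℝ × ℝ => l p.2) (volume.restrict lowTri) :=
    (hm.comp_snd (μ := volume.restrict (Set.Ioo (0 : ℝ) 1))).mono_measure restrict_lowTri_le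
  have h3 : Measurable (fun p : ℝ × ℝ => p.2 - p.1) := measurable_snd.sub measurable_fst
  exact (Real.measurable_log.comp_aemeasurable
    ((h1.sub h2).aemeasurable.div h3.aemeasurable)).aestronglyMeasurable

/-- A Lipschitz function is differentiable almost everywhere, and where it is, its left derivative
is its derivative. -/
lemma ae_hasDerivAt_leftDeriv {α l : ℝ → ℝ} {K : NNReal}
    (hK : LipschitzOnWith K α (Set.Icc 0 1))
    (hl : ∀ x ∈ Set.Ioc (0 : ℝ) 1, HasDerivWithinAt α (l x) (Set.Iio x) x) :
    ∀ᵐ x ∂(volume.restrict (Set.Ioo (0 : ℝ) 1)), HasDerivAt α (l x) x := by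
  rw [ae_restrict_iff' measurableSet_Ioo]
  filter_upwards [hK.ae_differentiableWithinAt_of_mem] with x hx hxI
  have hd := ((hx ⟨hxI.1.le, hxI.2.le⟩).differentiableAt (Icc_mem_nhds hxI.1 hxI.2)).hasDerivAt
  have huniq : deriv α x = l x :=
    (uniqueDiffWithinAt_Iio x).eq_deriv _ hd.hasDerivWithinAt (hl x ⟨hxI.1, hxI.2.le⟩)
  rwa [huniq] at hd


/-- Let `α : [0,1] → ℝ` be Lipschitz and strongly concave with `α(0) = α(1) = 0`, with left
derivative `l = ∂⁻α` on `(0,1]`, and fix `ε₂ > 0`. There is `ε₃ > 0` such that for every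
Lipschitz concave `α̂` with `α̂(0) = α̂(1) = 0` uniformly within `ε₃` of `α`, with left
derivative `l̂ = ∂⁻α̂`, one has `V(l̂) < exp(ε₂/2) V(l)`. -/
theorem stmt_15 (α : ℝ → ℝ)
    (hlip : ∃ K : NNReal, LipschitzOnWith K α (Set.Icc 0 1))
    (hsc : ∃ c : ℝ, 0 < c ∧ ConcaveOn ℝ (Set.Icc 0 1) (fun x => α x + c / 2 * x ^ 2))
    (hα0 : α 0 = 0) (hα1 : α 1 = 0)
    (l : ℝ → ℝ) (hl : ∀ x ∈ Set.Ioc (0 : ℝ) 1, HasDerivWithinAt α (l x) (Set.Iio x) x)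
    (ε₂ : ℝ) (hε₂ : 0 < ε₂) :
    ∃ ε₃ : ℝ, 0 < ε₃ ∧ ∀ αh : ℝ → ℝ,
      (∃ K : NNReal, LipschitzOnWith K αh (Set.Icc 0 1)) →
      ConcaveOn ℝ (Set.Icc 0 1) αh →
      αh 0 = 0 → αh 1 = 0 →
      (∀ x ∈ Set.Icc (0 : ℝ) 1, |α x - αh x| < ε₃) →
      ∀ lh : ℝ → ℝ, (∀ x ∈ Set.Ioc (0 : ℝ) 1, HasDerivWithinAt αh (lh x) (Set.Iio x) x) →
      Vcont lh < Real.exp (ε₂ / 2) * Vcont l := by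
  obtain ⟨K, hK⟩ := hlip
  obtain ⟨c, hc0, hc⟩ := hsc
  have hM : (1 : ℝ) ≤ K + 1 := by linarith [K.coe_nonneg]
  have hαK : ∀ x ∈ Set.Icc (0 : ℝ) 1, α x ≤ K := by
    intro x hx
    have h := hK.dist_le_mul x hx 0 ⟨le_rfl, zero_le_one⟩
    rw [Real.dist_eq, Real.dist_eq, hα0, sub_zero, sub_zero, abs_of_nonneg hx.1] at h
    have := le_abs_self (α x)
    nlinarith [K.coe_nonneg, hx.2]
  have hconc : ConcaveOn ℝ (Set.Icc 0 1) α := by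
    -- Subtracting the convex quadratic from the concave sum preserves concavity.
    have hq : ConvexOn ℝ (Set.Icc (0 : ℝ) 1) (fun x : ℝ => c / 2 * x ^ 2) :=
      ((even_two.convexOn_pow (𝕜 := ℝ)).subset (Set.subset_univ _) (convex_Icc 0 1)).smul
        (by positivity : 0 ≤ c / 2)
    have h := hc.sub hq
    rwa [show (fun x => α x + c / 2 * x ^ 2) - (fun x => c / 2 * x ^ 2) = α from
      funext fun x => add_sub_cancel_right _ _] at h
  set f : ℝ × ℝ → ℝ := fun p => Real.log ((l p.1 - l p.2) / (p.2 - p.1)) with hf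
  have hG := integrableOn_domFun (K + 1 : ℝ)
  have hfG : ∀ p ∈ lowTri, f p ≤ domFun (K + 1) p := fun p hp =>
    log_quot_le_domFun hM hconc hα0 hα1 (fun x hx => (hαK x hx).trans (by linarith)) hl hp
  have hfint : IntegrableOn f lowTri volume := by
    have hconst : Integrable (fun _ : ℝ × ℝ => |Real.log c|) (volume.restrict lowTri) :=
      (integrable_const _).mono_measure restrict_lowTri_le
    refine Integrable.mono' (hG.integrable.add hconst)
      (aestronglyMeasurable_log_quot (leftDeriv_antitoneOn hconc hl)) ?_
    filter_upwards [ae_restrict_mem measurableSet_lowTri] with p hp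
    have h1 := hfG p hp
    have h2 : Real.log c ≤ f p := Real.log_le_log hc0 (le_quot_of_strongConcave hc hl hp)
    have h3 := domFun_nonneg hM hp
    simp only [Pi.add_apply, Real.norm_eq_abs]
    rw [abs_le]
    constructor <;> linarith [neg_abs_le (Real.log c), abs_nonneg (Real.log c)]
  have hVl : Vcont l = Real.exp (∫ p in lowTri, f p) := if_pos hfint
  by_contra! hcon
  choose A hAlip hAconc hA0 hA1 hAε L hL hbad using
    fun n : ℕ => hcon (1 / ((n : ℝ) + 1)) (by positivity)
  set g : ℕ → ℝ × ℝ → ℝ := fun n p => Real.log ((L n p.1 - L n p.2) / (p.2 - p.1)) with hg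
  have hgint : ∀ n, IntegrableOn (g n) lowTri volume := by
    intro n
    by_contra hn
    have hV0 : Vcont (L n) = 0 := if_neg hn
    have := hbad n
    rw [hV0, hVl] at this
    have : 0 < Real.exp (ε₂ / 2) * Real.exp (∫ p in lowTri, f p) := by positivity
    linarith
  have hlow : ∀ n, ε₂ / 2 + ∫ p in lowTri, f p ≤ ∫ p in lowTri, g n p := by
    intro n
    have h := hbad n
    rw [hVl, show Vcont (L n) = Real.exp (∫ p in lowTri, g n p) from if_pos (hgint n),
      ← Real.exp_add, Real.exp_le_exp] at h
    exact h
  have hgG : ∀ n, ∀ p ∈ lowTri, g n p ≤ domFun (K + 1) p := by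
    intro n p hp
    refine log_quot_le_domFun hM (hAconc n) (hA0 n) (hA1 n) (fun x hx => ?_) (hL n) hp
    have h1 := abs_lt.1 (hAε n x hx)
    have h2 : 1 / ((n : ℝ) + 1) ≤ 1 := by
      rw [div_le_one (by positivity)]
      linarith [(Nat.cast_nonneg n : (0 : ℝ) ≤ n)]
    linarith [hαK x hx]
  have hAlim : ∀ u ∈ Set.Icc (0 : ℝ) 1,
      Filter.Tendsto (fun n => A n u) Filter.atTop (nhds (α u)) := by
    intro u hu
    rw [tendsto_iff_dist_tendsto_zero]
    refine squeeze_zero (fun n => dist_nonneg) (fun n => ?_)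
      (tendsto_one_div_add_atTop_nhds_zero_nat (𝕜 := ℝ))
    rw [dist_comm, Real.dist_eq]
    exact (hAε n u hu).le
  have hae := ae_hasDerivAt_leftDeriv hK hl
  have hlim : ∀ᵐ p ∂((volume : Measure (ℝ × ℝ)).restrict lowTri),
      Filter.Tendsto (fun n => g n p) Filter.atTop (nhds (f p)) := by
    have hfst := (Measure.absolutelyContinuous_of_le restrict_lowTri_le).ae_le
      (Measure.quasiMeasurePreserving_fst.ae hae)
    have hsnd := (Measure.absolutelyContinuous_of_le restrict_lowTri_le).ae_le
      (Measure.quasiMeasurePreserving_snd.ae hae)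
    filter_upwards [hfst, hsnd, ae_restrict_mem measurableSet_lowTri] with p hp1 hp2 hp
    obtain ⟨hx, hy⟩ := lowTri_subset hp
    have t1 := tendsto_leftDeriv hx hAconc (fun n => hL n p.1 ⟨hx.1, hx.2.le⟩) hAlim hp1
    have t2 := tendsto_leftDeriv hy hAconc (fun n => hL n p.2 ⟨hy.1, hy.2.le⟩) hAlim hp2
    exact ((t1.sub t2).div_const _).log
      (hc0.trans_le (le_quot_of_strongConcave hc hl hp)).ne'
  have hdct : Filter.Tendsto (fun n => ∫ p in lowTri, (max (g n p) (f p) - f p)) Filter.atTop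
      (nhds (∫ _ in lowTri, (0 : ℝ))) := by
    refine tendsto_integral_of_dominated_convergence (fun p => domFun (K + 1) p - f p)
      (fun n => (((hgint n).sup hfint).sub hfint).aestronglyMeasurable)
      (hG.sub hfint) (fun n => ?_) ?_
    · filter_upwards [ae_restrict_mem measurableSet_lowTri] with p hp
      rw [Real.norm_eq_abs, abs_of_nonneg (sub_nonneg.2 (le_max_right _ _))]
      exact sub_le_sub_right (max_le (hgG n p hp) (hfG p hp)) _
    · filter_upwards [hlim] with p hp
      simpa using (hp.max (tendsto_const_nhds (x := f p))).sub (tendsto_const_nhds (x := f p))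
  have hge : ∀ n, ε₂ / 2 ≤ ∫ p in lowTri, (max (g n p) (f p) - f p) := by
    intro n
    have h1 : ∫ p in lowTri, (g n p - f p) ≤ ∫ p in lowTri, (max (g n p) (f p) - f p) :=
      integral_mono ((hgint n).sub hfint) (((hgint n).sup hfint).sub hfint)
        (fun p => sub_le_sub_right (le_max_left _ _) _)
    rw [integral_sub (hgint n) hfint] at h1
    linarith [hlow n]
  have := ge_of_tendsto' hdct hge
  simp only [integral_zero] at this
  linarith
end
end

section
/- Let k, m ≥ 1 be integers and let K ⊂ ℝᵏ × ℝᵐ be a compact convex set with nonempty interior. Let π : ℝᵏ × ℝᵐ → ℝᵏ denote the projection π(x, y) = x, and let b = π(c), where c is the barycenter of K with respect to (k+m)-dimensional Lebesgue measure. Then the m-dimensional Lebesgue measure of the fiber {y ∈ ℝᵐ : (b, y) ∈ K} is at least vol_{k+m}(K) / vol_k(π(K)). -/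
/-! Write `f x` for the volume of the fiber of `K` over `x`, `W = vol K = ∫ f` and
`V = vol (π K)`. The function `f` is log-concave (`fiberVol_logConcave`) and upper semicontinuous
(`upperSemicontinuous_fiberVol`), so the hypograph of `log f` is convex and closed. It therefore
contains the average over `K` of `(x, log f x)`, which is Jensen's inequality: `log f b` is at least
the average of `log f x` over `(x, y) ∈ K`. Since `log z ≥ 1 - 1 / z`,
`log f x ≥ log (W / V) + 1 - (W / V) / f x`, and the average of `1 / f x` over `K` is at most `V / W`
by Fubini (`lintegral_inv_fiberVol_le`). Hence `log f b ≥ log (W / V)`.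

Log-concavity of `f` is the Prékopa–Leindler inequality for indicators. On the line it follows
from the Brunn–Minkowski inequality for superlevel sets and the layer cake formula, together with
the weighted AM–GM inequality; it passes to products by Fubini, hence to `ℝᵐ` by induction. -/

open MeasureTheory
open scoped ENNReal Pointwise

noncomputable section

/-! ### The one-dimensional Brunn–Minkowski inequality -/

/-- Translates of `A` and `B` by `min B` and `max A` both lie in `A + B` and share only the point
`max A + min B`. -/
lemma brunnMinkowski_real_of_isCompact {A B : Set ℝ} (hA : IsCompact A) (hB : IsCompact B) (hA0 : A.Nonempty)
    (hB0 : B.Nonempty) : volume A + volume B ≤ volume (A + B) := by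
  obtain ⟨a, haA, ha⟩ := hA.exists_isGreatest hA0
  obtain ⟨b, hbB, hb⟩ := hB.exists_isLeast hB0
  have hsub : (b +ᵥ A) ∪ (a +ᵥ B) ⊆ A + B := by
    rintro _ (⟨x, hx, rfl⟩ | ⟨x, hx, rfl⟩)
    · exact ⟨x, hx, b, hbB, by simp [add_comm]⟩
    · exact ⟨a, haA, x, hx, by simp⟩
  have hdisj : AEDisjoint volume (b +ᵥ A) (a +ᵥ B) := by
    refine measure_mono_null (t := {a + b}) ?_ (by simp)
    rintro _ ⟨⟨x, hx, rfl⟩, ⟨y, hy, hxy⟩⟩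
    have h1 := ha hx
    have h2 := hb hy
    simp only [vadd_eq_add, Set.mem_singleton_iff] at hxy ⊢
    linarith
  calc volume A + volume B = volume (b +ᵥ A) + volume (a +ᵥ B) := by
        simp only [measure_vadd]
    _ = volume ((b +ᵥ A) ∪ (a +ᵥ B)) :=
        (measure_union₀ (hB.vadd a).measurableSet.nullMeasurableSet hdisj).symm
    _ ≤ _ := measure_mono hsub

/-- Both sets are exhausted by compact subsets, kept nonempty by inserting a fixed point. -/
lemma brunnMinkowski_real {A B : Set ℝ} (hA : MeasurableSet A) (hB : MeasurableSet B)
    (hA0 : A.Nonempty) (hB0 : B.Nonempty) : volume A + volume B ≤ volume (A + B) := by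
  obtain ⟨a, ha⟩ := hA0
  obtain ⟨b, hb⟩ := hB0
  rw [hA.measure_eq_iSup_isCompact, hB.measure_eq_iSup_isCompact]
  simp only [iSup_and']
  refine ENNReal.biSup_add_biSup_le' ⟨∅, by simp⟩ ⟨∅, by simp⟩ ?_
  rintro A' ⟨hA', hA'c⟩ B' ⟨hB', hB'c⟩
  calc volume A' + volume B' ≤ volume (insert a A') + volume (insert b B') :=
        add_le_add (measure_mono (Set.subset_insert _ _)) (measure_mono (Set.subset_insert _ _))
    _ ≤ volume (insert a A' + insert b B') :=
        brunnMinkowski_real_of_isCompact (hA'c.insert a) (hB'c.insert b) (Set.insert_nonempty _ _)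
          (Set.insert_nonempty _ _)
    _ ≤ volume (A + B) := measure_mono (Set.add_subset_add
          (Set.insert_subset ha hA') (Set.insert_subset hb hB'))

lemma brunnMinkowski_real_weighted {A B C : Set ℝ} {s t : ℝ} (hs : 0 < s) (ht : 0 < t)
    (hA : MeasurableSet A) (hB : MeasurableSet B) (hA0 : A.Nonempty)
    (hB0 : B.Nonempty) (h : ∀ x ∈ A, ∀ y ∈ B, s * x + t * y ∈ C) :
    ENNReal.ofReal s * volume A + ENNReal.ofReal t * volume B ≤ volume C := by
  have h1 := brunnMinkowski_real (hA.const_smul₀ s) (hB.const_smul₀ t) hA0.smul_set hB0.smul_set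
  simp only [Measure.addHaar_smul, Module.finrank_self, pow_one, abs_of_pos hs, abs_of_pos ht] at h1
  refine h1.trans (measure_mono ?_)
  rintro _ ⟨_, ⟨x, hx, rfl⟩, _, ⟨y, hy, rfl⟩, rfl⟩
  exact h x hx y hy

/-! ### The Prékopa–Leindler inequality -/

lemma rpow_mul_rpow_le_weighted_sum {s t : ℝ} (hs : 0 < s) (ht : 0 < t) (hst : s + t = 1)
    (a b : ℝ≥0∞) :
    a ^ s * b ^ t ≤ ENNReal.ofReal s * a + ENNReal.ofReal t * b := by
  by_cases ha : a = ∞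
  · simp [ha, ENNReal.mul_top, hs]
  by_cases hb : b = ∞
  · simp [hb, ENNReal.mul_top, ht]
  lift a to NNReal using ha
  lift b to NNReal using hb
  have := NNReal.geom_mean_le_arith_mean2_weighted s.toNNReal t.toNNReal a b
    (by rw [← Real.toNNReal_add hs.le ht.le, hst]; simp)
  rw [Real.coe_toNNReal _ hs.le, Real.coe_toNNReal _ ht.le] at this
  rw [← ENNReal.coe_rpow_of_nonneg _ hs.le, ← ENNReal.coe_rpow_of_nonneg _ ht.le]
  unfold ENNReal.ofReal
  exact_mod_cast this

/-- Layer cake formula for an `ℝ≥0∞`-valued function bounded by `1`. -/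
lemma lintegral_eq_lintegral_superlevel {u : ℝ → ℝ≥0∞} (hu : Measurable u) (hu1 : ∀ x, u x ≤ 1) :
    ∫⁻ x, u x = ∫⁻ r in Set.Ioi (0 : ℝ), volume {x | ENNReal.ofReal r < u x} := by
  have h := lintegral_eq_lintegral_meas_lt volume (f := fun x => (u x).toReal)
    (Filter.Eventually.of_forall fun x => ENNReal.toReal_nonneg) hu.ennreal_toReal.aemeasurable
  have h1 : ∀ x, u x ≠ ∞ := fun x => ((hu1 x).trans_lt ENNReal.one_lt_top).ne
  simp only [ENNReal.ofReal_toReal (h1 _)] at h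
  rw [h]
  refine setLIntegral_congr_fun measurableSet_Ioi fun r hr => ?_
  simp only [ENNReal.ofReal_lt_iff_lt_toReal (le_of_lt hr) (h1 _)]

/-- When `u` and `v` have supremum exactly `1`, their superlevel sets at every height `r < 1` are
nonempty, so the one-dimensional Brunn–Minkowski inequality can be integrated over `r`. -/
lemma prekopaLeindler_real_normalized {s t : ℝ} (hs : 0 < s) (ht : 0 < t) (hst : s + t = 1)
    {u v w : ℝ → ℝ≥0∞} (hu : Measurable u) (hv : Measurable v) (hw : Measurable w)
    (hu1 : ⨆ x, u x = 1) (hv1 : ⨆ x, v x = 1)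
    (h : ∀ x y, u x ^ s * v y ^ t ≤ w (s • x + t • y)) :
    (∫⁻ x, u x) ^ s * (∫⁻ x, v x) ^ t ≤ ∫⁻ x, w x := by
  refine (rpow_mul_rpow_le_weighted_sum hs ht hst _ _).trans ?_
  have hu' : ∀ x, u x ≤ 1 := fun x => hu1 ▸ le_iSup u x
  have hv' : ∀ x, v x ≤ 1 := fun x => hv1 ▸ le_iSup v x
  -- The layer cake formula needs a bounded function, so `w` is truncated at height `1`.
  have hmin : ∫⁻ x, min (w x) 1 ≤ ∫⁻ x, w x := lintegral_mono fun x => min_le_left _ _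
  refine le_trans ?_ hmin
  rw [lintegral_eq_lintegral_superlevel hu hu', lintegral_eq_lintegral_superlevel hv hv', lintegral_eq_lintegral_superlevel (hw.min measurable_const) (fun x => min_le_right _ _),
    ← lintegral_const_mul' _ _ ENNReal.ofReal_ne_top,
    ← lintegral_const_mul' _ _ ENNReal.ofReal_ne_top, ← lintegral_add_left]
  · refine setLIntegral_mono' measurableSet_Ioi fun r hr => ?_
    rcases lt_or_ge r 1 with hr1 | hr1
    · have hr1' : ENNReal.ofReal r < 1 := by simpa using hr1
      have hA0 : {x | ENNReal.ofReal r < u x}.Nonempty := lt_iSup_iff.1 (hr1'.trans_eq hu1.symm)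
      have hB0 : {x | ENNReal.ofReal r < v x}.Nonempty := lt_iSup_iff.1 (hr1'.trans_eq hv1.symm)
      refine brunnMinkowski_real_weighted hs ht (measurableSet_lt measurable_const hu)
        (measurableSet_lt measurable_const hv) hA0 hB0 fun x hx y hy => ?_
      refine lt_min (lt_of_lt_of_le ?_ (h x y)) hr1'
      calc ENNReal.ofReal r = ENNReal.ofReal r ^ s * ENNReal.ofReal r ^ t := by
            rw [← ENNReal.rpow_add_of_nonneg _ _ hs.le ht.le, hst, ENNReal.rpow_one]
        _ < u x ^ s * v y ^ t := ENNReal.mul_lt_mul (ENNReal.rpow_lt_rpow hx hs)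
            (ENNReal.rpow_lt_rpow hy ht)
    · have h1 : ∀ z : ℝ≥0∞, z ≤ 1 → ¬ ENNReal.ofReal r < z := fun z hz => not_lt.2
        (hz.trans (by simpa using hr1))
      simp [fun x => h1 _ (hu' x), fun x => h1 _ (hv' x)]
  · refine Measurable.const_mul (Antitone.measurable fun a b hab => measure_mono fun x hx => ?_) _
    exact lt_of_le_of_lt (ENNReal.ofReal_le_ofReal hab) hx

/-- The Prékopa–Leindler inequality, as a property of the measure space `E`. -/
def PrekopaLeindler (E : Type*) [AddCommGroup E] [Module ℝ E] [MeasureSpace E] : Prop :=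
  ∀ s t : ℝ, 0 < s → 0 < t → s + t = 1 → ∀ u v w : E → ℝ≥0∞,
    Measurable u → Measurable v → Measurable w →
    (∀ x y, u x ^ s * v y ^ t ≤ w (s • x + t • y)) →
    (∫⁻ x, u x) ^ s * (∫⁻ x, v x) ^ t ≤ ∫⁻ x, w x

/-- Reduction to supremum `1` by rescaling `u`, `v` and `w`. -/
lemma prekopaLeindler_real_bounded {s t : ℝ} (hs : 0 < s) (ht : 0 < t) (hst : s + t = 1)
    {u v w : ℝ → ℝ≥0∞} (hu : Measurable u) (hv : Measurable v) (hw : Measurable w)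
    (hu1 : ⨆ x, u x ≠ ∞) (hv1 : ⨆ x, v x ≠ ∞)
    (h : ∀ x y, u x ^ s * v y ^ t ≤ w (s • x + t • y)) :
    (∫⁻ x, u x) ^ s * (∫⁻ x, v x) ^ t ≤ ∫⁻ x, w x := by
  set U := ⨆ x, u x with hU
  set V := ⨆ x, v x with hV
  by_cases hU0 : U = 0
  · have : ∀ x, u x = 0 := fun x => le_antisymm (hU0 ▸ le_iSup u x) bot_le
    simp [this, hs]
  by_cases hV0 : V = 0
  · have : ∀ x, v x = 0 := fun x => le_antisymm (hV0 ▸ le_iSup v x) bot_le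
    simp [this, ht]
  have key : ∀ a b : ℝ≥0∞, (U⁻¹ * a) ^ s * (V⁻¹ * b) ^ t = (U ^ s * V ^ t)⁻¹ * (a ^ s * b ^ t) := by
    intro a b
    rw [ENNReal.mul_rpow_of_nonneg _ _ hs.le, ENNReal.mul_rpow_of_nonneg _ _ ht.le,
      ENNReal.mul_inv (by simp [hU0, hu1]) (by simp [hu1, hU0]),
      ENNReal.inv_rpow, ENNReal.inv_rpow]
    ring
  have hc0 : U ^ s * V ^ t ≠ 0 := by simp [hU0, hV0, hu1, hv1]
  have hc1 : U ^ s * V ^ t ≠ ∞ := ENNReal.mul_ne_top (ENNReal.rpow_ne_top_of_nonneg hs.le hu1)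
    (ENNReal.rpow_ne_top_of_nonneg ht.le hv1)
  have := prekopaLeindler_real_normalized hs ht hst (u := fun x => U⁻¹ * u x) (v := fun x => V⁻¹ * v x)
    (w := fun x => (U ^ s * V ^ t)⁻¹ * w x) (hu.const_mul _) (hv.const_mul _) (hw.const_mul _)
    (by rw [← ENNReal.mul_iSup, ← hU, ENNReal.inv_mul_cancel hU0 hu1])
    (by rw [← ENNReal.mul_iSup, ← hV, ENNReal.inv_mul_cancel hV0 hv1])
    (fun x y => by rw [key]; gcongr; exact h x y)
  rw [lintegral_const_mul _ hu, lintegral_const_mul _ hv, lintegral_const_mul _ hw, key] at this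
  exact (ENNReal.mul_le_mul_iff_right (ENNReal.inv_ne_zero.2 hc1) (ENNReal.inv_ne_top.2 hc0)).1 this

lemma tendsto_lintegral_min_natCast {u : ℝ → ℝ≥0∞} (hu : Measurable u) :
    Filter.Tendsto (fun n : ℕ => ∫⁻ x, min (u x) n) Filter.atTop (nhds (∫⁻ x, u x)) := by
  refine lintegral_tendsto_of_tendsto_of_monotone
    (fun n => (hu.min measurable_const).aemeasurable) ?_ ?_
  · exact Filter.Eventually.of_forall fun x m n hmn =>
      min_le_min le_rfl (by exact_mod_cast hmn)
  · refine Filter.Eventually.of_forall fun x => ?_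
    simpa using (tendsto_const_nhds (x := u x)).min ENNReal.tendsto_nat_nhds_top

/-- Unbounded functions are handled by truncation at height `n` and monotone convergence. -/
lemma prekopaLeindler_real : PrekopaLeindler ℝ := by
  intro s t hs ht hst u v w hu hv hw h
  by_cases hu0 : ∫⁻ x, u x = 0
  · simp [hu0, hs]
  by_cases hv0 : ∫⁻ x, v x = 0
  · simp [hv0, ht]
  have lim := ENNReal.Tendsto.mul ((tendsto_lintegral_min_natCast hu).ennrpow_const s)
    (Or.inl (by simp [hu0, hs, hs.not_gt])) ((tendsto_lintegral_min_natCast hv).ennrpow_const t)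
    (Or.inl (by simp [hv0, ht, ht.not_gt]))
  refine le_of_tendsto' lim fun n => ?_
  have hb : ∀ f : ℝ → ℝ≥0∞, ⨆ x, min (f x) (n : ℝ≥0∞) ≠ ∞ := fun f =>
    ((iSup_le fun x => min_le_right _ _).trans_lt (ENNReal.natCast_lt_top n)).ne
  refine prekopaLeindler_real_bounded hs ht hst (hu.min measurable_const) (hv.min measurable_const) hw (hb _) (hb _)
    fun x y => le_trans ?_ (h x y)
  gcongr <;> exact min_le_left _ _

/-- The inequality on `F` shows that the partial integrals over `F` satisfy the hypothesis of the
inequality on `E`. -/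
lemma PrekopaLeindler.prod {E F : Type*} [AddCommGroup E] [Module ℝ E] [MeasureSpace E]
    [AddCommGroup F] [Module ℝ F] [MeasureSpace F] [SFinite (volume : Measure E)]
    [SFinite (volume : Measure F)]
    (hE : PrekopaLeindler E) (hF : PrekopaLeindler F) : PrekopaLeindler (E × F) := by
  intro s t hs ht hst u v w hu hv hw h
  simp only [Measure.volume_eq_prod]
  rw [lintegral_prod _ hu.aemeasurable, lintegral_prod _ hv.aemeasurable,
    lintegral_prod _ hw.aemeasurable]
  refine hE s t hs ht hst _ _ _ hu.lintegral_prod_right' hv.lintegral_prod_right'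
    hw.lintegral_prod_right' fun x x' => ?_
  exact hF s t hs ht hst _ _ _ (hu.comp measurable_prodMk_left) (hv.comp measurable_prodMk_left)
    (hw.comp measurable_prodMk_left) fun y y' => h (x, y) (x', y')

lemma PrekopaLeindler.of_map {E F : Type*} [AddCommGroup E] [Module ℝ E] [MeasureSpace E]
    [AddCommGroup F] [Module ℝ F] [MeasureSpace F]
    (hE : PrekopaLeindler E) (e : E →ₗ[ℝ] F) (he : MeasurePreserving e volume volume) :
    PrekopaLeindler F := by
  intro s t hs ht hst u v w hu hv hw h
  rw [← he.lintegral_comp hu, ← he.lintegral_comp hv, ← he.lintegral_comp hw]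
  refine hE s t hs ht hst _ _ _ (hu.comp he.measurable) (hv.comp he.measurable)
    (hw.comp he.measurable) fun x y => ?_
  simpa using h (e x) (e y)

lemma prekopaLeindler_pi (n : ℕ) : PrekopaLeindler (Fin n → ℝ) := by
  induction n with
  | zero =>
    intro s t hs ht hst u v w hu hv hw h
    have h0 : (volume : Measure (Fin 0 → ℝ)) Set.univ = 1 := by
      simp [volume_pi]
    simp only [lintegral_unique, h0, mul_one]
    convert h default default
  | succ n ih =>
    refine (prekopaLeindler_real.prod ih).of_map
      (e := (Fin.consLinearEquiv ℝ (fun _ : Fin (n + 1) => ℝ)).toLinearMap) ?_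
    have hfun : ⇑(Fin.consLinearEquiv ℝ (fun _ : Fin (n + 1) => ℝ)).toLinearMap =
        ⇑(MeasurableEquiv.piFinSuccAbove (fun _ : Fin (n + 1) => ℝ) 0).symm := by
      funext x
      exact (Fin.insertNth_zero (α := fun _ => ℝ) x.1 x.2).symm
    rw [hfun]
    exact (volume_preserving_piFinSuccAbove (fun _ : Fin (n + 1) => ℝ) 0).symm

lemma prekopaLeindler_euclidean (n : ℕ) : PrekopaLeindler (EuclideanSpace ℝ (Fin n)) :=
  (prekopaLeindler_pi n).of_map (e := (WithLp.linearEquiv 2 ℝ (Fin n → ℝ)).symm.toLinearMap)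
    (PiLp.volume_preserving_toLp (Fin n))

/-! ### Volumes of fibers of a compact convex set -/

section Fiber

variable {k m : ℕ} {K : Set (EuclideanSpace ℝ (Fin k) × EuclideanSpace ℝ (Fin m))}

/-- The `m`-dimensional volume of the fiber of `K` over `x`. -/
def fiberVol (K : Set (EuclideanSpace ℝ (Fin k) × EuclideanSpace ℝ (Fin m)))
    (x : EuclideanSpace ℝ (Fin k)) : ℝ≥0∞ :=
  volume {y : EuclideanSpace ℝ (Fin m) | (x, y) ∈ K}

lemma measurableSet_fiber (hK : IsCompact K) (x : EuclideanSpace ℝ (Fin k)) :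
    MeasurableSet {y : EuclideanSpace ℝ (Fin m) | (x, y) ∈ K} :=
  measurable_prodMk_left hK.measurableSet

lemma measurable_fiberVol (hK : IsCompact K) : Measurable (fiberVol K) :=
  measurable_measure_prodMk_left hK.measurableSet

/-- The Prékopa–Leindler inequality for the indicators of the fibers over `x`, `x'` and
`s • x + t • x'`. -/
lemma fiberVol_logConcave (hK : IsCompact K) (hKc : Convex ℝ K) {s t : ℝ} (hs : 0 < s)
    (ht : 0 < t) (hst : s + t = 1) (x x' : EuclideanSpace ℝ (Fin k)) :
    fiberVol K x ^ s * fiberVol K x' ^ t ≤ fiberVol K (s • x + t • x') := by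
  have hm := measurableSet_fiber hK
  have := prekopaLeindler_euclidean m s t hs ht hst _ _ _ (measurable_one.indicator (hm x))
    (measurable_one.indicator (hm x')) (measurable_one.indicator (hm (s • x + t • x'))) ?_
  · simpa only [fiberVol, lintegral_indicator_one (hm _)] using this
  · intro y y'
    by_cases hy : (x, y) ∈ K
    · by_cases hy' : (x', y') ∈ K
      · have h : (s • x + t • x', s • y + t • y') ∈ K := hKc hy hy' hs.le ht.le hst
        simp [Set.indicator, h, hy, hy']
      · simp [Set.indicator, hy', ht]
    · simp [Set.indicator, hy, hs]

/-- Any open set containing the fiber over `x` contains all fibers over points near `x`. -/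
lemma upperSemicontinuous_fiberVol (hK : IsCompact K) : UpperSemicontinuous (fiberVol K) := by
  intro x c hc
  obtain ⟨U, hKU, hU, hUc⟩ := Set.exists_isOpen_lt_of_lt _ _ hc
  have hC : IsCompact (K ∩ Prod.snd ⁻¹' Uᶜ) :=
    hK.inter_right (hU.isClosed_compl.preimage continuous_snd)
  have hx : x ∉ Prod.fst '' (K ∩ Prod.snd ⁻¹' Uᶜ) := by
    rintro ⟨⟨x, y⟩, ⟨h1, h2⟩, rfl⟩
    exact h2 (hKU h1)
  filter_upwards [(hC.image continuous_fst).isClosed.isOpen_compl.mem_nhds hx] with x' hx'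
  refine (measure_mono fun y hy => ?_).trans_lt hUc
  by_contra hyU
  exact hx' ⟨(x', y), ⟨hy, hyU⟩, rfl⟩

/-- The hypograph of `log ∘ fiberVol K`, written without the logarithm so that points where the
fiber is null (where the logarithm is `-∞`) are excluded. -/
def logHypograph (K : Set (EuclideanSpace ℝ (Fin k) × EuclideanSpace ℝ (Fin m))) :
    Set (EuclideanSpace ℝ (Fin k) × ℝ) :=
  {p | ENNReal.ofReal (Real.exp p.2) ≤ fiberVol K p.1}

lemma isClosed_logHypograph (hK : IsCompact K) : IsClosed (logHypograph K) :=
  (upperSemicontinuous_iff_IsClosed_hypograph.1 (upperSemicontinuous_fiberVol hK)).preimage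
    (f := fun p : EuclideanSpace ℝ (Fin k) × ℝ => (p.1, ENNReal.ofReal (Real.exp p.2)))
    (continuous_fst.prodMk
      (ENNReal.continuous_ofReal.comp (Real.continuous_exp.comp continuous_snd)))

lemma convex_logHypograph (hK : IsCompact K) (hKc : Convex ℝ K) :
    Convex ℝ (logHypograph K) := by
  refine convex_iff_forall_pos.2 fun p hp q hq s t hs ht hst => ?_
  refine le_trans (le_of_eq ?_) ((mul_le_mul' (ENNReal.rpow_le_rpow hp hs.le)
    (ENNReal.rpow_le_rpow hq ht.le)).trans (fiberVol_logConcave hK hKc hs ht hst p.1 q.1))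
  rw [ENNReal.ofReal_rpow_of_pos (Real.exp_pos _), ENNReal.ofReal_rpow_of_pos (Real.exp_pos _),
    ← ENNReal.ofReal_mul (by positivity), ← Real.exp_mul, ← Real.exp_mul, ← Real.exp_add]
  simp [mul_comm]

/-- The projection of Lebesgue measure on `K` has density `fiberVol K`. -/
lemma setLIntegral_comp_fst (hK : IsCompact K) {g : EuclideanSpace ℝ (Fin k) → ℝ≥0∞}
    (hg : Measurable g) : ∫⁻ p in K, g p.1 = ∫⁻ x, g x * fiberVol K x := by
  have hgm : Measurable fun p : EuclideanSpace ℝ (Fin k) × EuclideanSpace ℝ (Fin m) => g p.1 :=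
    hg.comp measurable_fst
  rw [← lintegral_indicator hK.measurableSet, Measure.volume_eq_prod, lintegral_prod _
    (hgm.indicator hK.measurableSet).aemeasurable]
  refine lintegral_congr fun x => ?_
  rw [fiberVol, ← lintegral_indicator_one (measurableSet_fiber hK x), ← lintegral_const_mul _
    (measurable_one.indicator (measurableSet_fiber hK x))]
  refine lintegral_congr fun y => ?_
  by_cases h : (x, y) ∈ K <;> simp [Set.indicator, h]

lemma lintegral_inv_fiberVol_le (hK : IsCompact K) :
    ∫⁻ p in K, (fiberVol K p.1)⁻¹ ≤ volume (Prod.fst '' K) := by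
  rw [setLIntegral_comp_fst hK (g := fun x => (fiberVol K x)⁻¹) (measurable_fiberVol hK).inv,
    ← lintegral_indicator_one (hK.image continuous_fst).measurableSet]
  refine lintegral_mono fun x => ?_
  by_cases hx : x ∈ Prod.fst '' K
  · simp [Set.indicator, hx, ENNReal.inv_mul_le_one]
  · have : fiberVol K x = 0 := by
      have h : {y : EuclideanSpace ℝ (Fin m) | (x, y) ∈ K} = ∅ :=
        Set.eq_empty_of_forall_notMem fun y hy => hx ⟨(x, y), hy, rfl⟩
      rw [fiberVol, h, measure_empty]
    simp [this]

lemma fiberVol_le (x : EuclideanSpace ℝ (Fin k)) :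
    fiberVol K x ≤ volume (Prod.snd '' K) :=
  measure_mono fun y hy => ⟨(x, y), hy, rfl⟩

end Fiber

/-- Let `K ⊂ ℝᵏ × ℝᵐ` be a compact convex set with nonempty interior, `π` the projection onto
the first factor, and `b = π(c)` where `c` is the barycenter of `K`. Then the `m`-dimensional
Lebesgue measure of the fiber `{y : (b, y) ∈ K}` is at least `vol(K) / vol(π(K))`. -/
theorem stmt_16 (k m : ℕ) (hk : 1 ≤ k) (hm : 1 ≤ m)
    (K : Set (EuclideanSpace ℝ (Fin k) × EuclideanSpace ℝ (Fin m)))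
    (hKcpt : IsCompact K) (hKconv : Convex ℝ K) (hKint : (interior K).Nonempty) :
    volume K / volume (Prod.fst '' K) ≤
      volume {y : EuclideanSpace ℝ (Fin m) |
        (((volume K).toReal⁻¹ • ∫ x in K, x).1, y) ∈ K} := by
  change _ ≤ fiberVol K _
  have hW0 : volume K ≠ 0 := (Measure.measure_pos_of_nonempty_interior _ hKint).ne'
  have hWt : volume K ≠ ∞ := hKcpt.measure_ne_top
  have hVt : volume (Prod.fst '' K) ≠ ∞ := (hKcpt.image continuous_fst).measure_ne_top
  have hMt : volume (Prod.snd '' K) ≠ ∞ := (hKcpt.image continuous_snd).measure_ne_top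
  have hV0 : volume (Prod.fst '' K) ≠ 0 := by
    refine (Measure.measure_pos_of_nonempty_interior _ ?_).ne'
    exact (hKint.image Prod.fst).mono
      (interior_maximal (Set.image_mono interior_subset) (isOpenMap_fst _ isOpen_interior))
  have hft : ∀ x, fiberVol K x ≠ ∞ := fun x => ((fiberVol_le x).trans_lt hMt.lt_top).ne
  have hfm : Measurable fun p : EuclideanSpace ℝ (Fin k) × EuclideanSpace ℝ (Fin m) =>
    fiberVol K p.1 := (measurable_fiberVol hKcpt).comp measurable_fst
  have hinv := lintegral_inv_fiberVol_le hKcpt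
  have hinvt := (hinv.trans_lt hVt.lt_top).ne
  have hpos : ∀ᵐ p ∂volume.restrict K, 0 < (fiberVol K p.1).toReal := by
    filter_upwards [ae_lt_top hfm.inv hinvt] with p hp
    exact ENNReal.toReal_pos (fun h => by simp [h] at hp) (hft _)
  have hint_inv : IntegrableOn (fun p => (fiberVol K p.1).toReal⁻¹) K := by
    simpa only [Pi.inv_apply, ENNReal.toReal_inv] using!
      integrable_toReal_of_lintegral_ne_top hfm.inv.aemeasurable hinvt
  have hint_f : IntegrableOn (fun p => (fiberVol K p.1).toReal) K := by
    refine integrable_toReal_of_lintegral_ne_top hfm.aemeasurable (ne_of_lt ?_)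
    refine (lintegral_mono (g := fun _ => volume (Prod.snd '' K)) fun p => fiberVol_le _).trans_lt ?_
    simpa using ENNReal.mul_lt_top hMt.lt_top hWt.lt_top
  -- `|log z| ≤ z + 1 / z` for `z > 0`, and both terms are integrable over `K`.
  have hint_log : IntegrableOn (fun p => Real.log (fiberVol K p.1).toReal) K := by
    refine (hint_f.add hint_inv).mono' hfm.ennreal_toReal.log.aestronglyMeasurable ?_
    filter_upwards [hpos] with p hp
    have h1 := Real.log_le_sub_one_of_pos hp
    have h2 := Real.one_sub_inv_le_log_of_pos hp
    have h3 := inv_pos.2 hp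
    simp only [Pi.add_apply, Real.norm_eq_abs]
    exact abs_le.2 ⟨by linarith, by linarith⟩
  have hint_id : IntegrableOn
      (fun p : EuclideanSpace ℝ (Fin k) × EuclideanSpace ℝ (Fin m) => p) K :=
    continuousOn_id.integrableOn_compact hKcpt
  have hmem := (convex_logHypograph hKcpt hKconv).set_average_mem (μ := volume) (t := K)
    (f := fun p => (p.1, Real.log (fiberVol K p.1).toReal)) (isClosed_logHypograph hKcpt) hW0 hWt
    (by
      filter_upwards [hpos] with p hp
      simp [logHypograph, Real.exp_log hp, ENNReal.ofReal_toReal (hft _)])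
    (hint_id.fst.prodMk hint_log)
  rw [setAverage_eq, integral_pair hint_id.fst hint_log, ← fst_integral hint_id] at hmem
  refine le_trans ?_ hmem
  -- It remains to bound the average of `log (fiberVol K)` over `K` below by `log (W / V)`, using
  -- `log z ≥ 1 - 1 / z` at `z = fiberVol K x / (W / V)`.
  set W := (volume K).toReal with hW
  set V := (volume (Prod.fst '' K)).toReal with hV
  have hWpos : 0 < W := ENNReal.toReal_pos hW0 hWt
  have hVpos : 0 < V := ENNReal.toReal_pos hV0 hVt
  have hinvR : ∫ p in K, (fiberVol K p.1).toReal⁻¹ ≤ V := by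
    have := integral_toReal (μ := volume.restrict K) hfm.inv.aemeasurable (ae_lt_top hfm.inv hinvt)
    simp only [Pi.inv_apply, ENNReal.toReal_inv] at this
    rw [this]
    exact ENNReal.toReal_mono hVt hinv
  have hint_const : Integrable (fun _ => Real.log (W / V) + 1) (volume.restrict K) :=
    integrableOn_const hWt
  have hlog : W * Real.log (W / V) ≤ ∫ p in K, Real.log (fiberVol K p.1).toReal := by
    calc W * Real.log (W / V)
        ≤ W * (Real.log (W / V) + 1) - W / V * ∫ p in K, (fiberVol K p.1).toReal⁻¹ := by
          have := mul_le_mul_of_nonneg_left hinvR (div_pos hWpos hVpos).le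
          rw [div_mul_cancel₀ _ hVpos.ne'] at this
          linarith
      _ = ∫ p in K, ((Real.log (W / V) + 1) - W / V * (fiberVol K p.1).toReal⁻¹) := by
          rw [integral_sub hint_const (hint_inv.const_mul _), integral_const_mul]
          simp [measureReal_def, hW]
      _ ≤ _ := by
          refine integral_mono_ae (hint_const.sub (hint_inv.const_mul _))
            hint_log ?_
          filter_upwards [hpos] with p hp
          have h1 := Real.one_sub_inv_le_log_of_pos (div_pos hp (div_pos hWpos hVpos))
          rw [Real.log_div hp.ne' (div_pos hWpos hVpos).ne', inv_div, div_eq_mul_inv (W / V)] at h1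
          linarith
  calc volume K / volume (Prod.fst '' K) = ENNReal.ofReal (W / V) := by
        rw [ENNReal.ofReal_div_of_pos hVpos, ENNReal.ofReal_toReal hWt, ENNReal.ofReal_toReal hVt]
    _ ≤ _ := by
        refine ENNReal.ofReal_le_ofReal ?_
        rw [← Real.log_le_iff_le_exp (div_pos hWpos hVpos)]
        simp only [Prod.smul_snd, smul_eq_mul, measureReal_def, ← hW]
        rw [← div_eq_inv_mul, le_div_iff₀ hWpos]
        linarith
end
end
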